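/- Let n ≥ 1, let X be a bi-Esakia co-tree with greatest element r, and suppose X_1, …, X_n, X_1', …, X_n' are clopen subsets of X such that: each X_i is convex and each X_i' is a downset; ↓X_1 = X_1 ⊎ X_1' and ↓X_i = X_i ⊎ ↓X_{i-1} ⊎ X_i' (disjoint unions) for all 1 < i ≤ n; ↓X_{i-1} ∩ ↑X_i' = ∅ for all 1 < i ≤ n; ↑X_1' = ↑X_1 ⊎ X_1' and ↑X_i = ↑X_{i-1} ∩ ↑X_i' for all 1 < i ≤ n; and r ∈ X_n. Then X is the disjoint union X_1 ⊎ … ⊎ X_n ⊎ X_1' ⊎ … ⊎ X_n', and the map f : X → C_n defined by f(z) = x_i if z ∈ X_i and f(z) = x_i' if z ∈ X_i' is a surjective continuous bi-p-morphism onto the n-comb C_n with the discrete topology. -/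

import Mathlib

/-!
Write `D i` for the downset `downClo (Xs i)`. Unfolding the recursion
`D i = Xs i ⊎ D (i - 1) ⊎ Xs' i` shows that `D i` is the union of all `Xs j`, `Xs' j` with `j ≤ i`
(`mem_downClo_iff`), and that `D` is increasing in `i`. Since `⊤ ∈ Xs n`, `D n` is everything, so
the sets cover `X`; they are disjoint because those of index `j < i` lie in `D (i - 1)`, which
misses `Xs i` and `Xs' i`.

The other ingredient is `Xs i ⊆ upClo (Xs (i - 1)) ∩ upClo (Xs' i)` for `i > 1`, together with
`Xs 1 ⊆ upClo (Xs' 1)`: by induction every point of `Xs i` lies above points of each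
`Xs j` and `Xs' j` with `j ≤ i` (`exists_below`). The map `f` is monotone by the description of `D i`
and because each `Xs' i` is a downset; the up condition holds because
`Xs i ∪ Xs' i ⊆ D j` whenever `i ≤ j`; the down condition is `exists_below`. Surjectivity is the
down condition applied at the greatest element, and continuity holds because the fibres of `f` are
exactly the given clopen sets.
-/

/-- The upward closure of a subset of a preorder. -/
def upClo {α : Type*} [Preorder α] (S : Set α) : Set α := {y | ∃ s ∈ S, s ≤ y}

/-- The downward closure of a subset of a preorder. -/
def downClo {α : Type*} [Preorder α] (S : Set α) : Set α := {y | ∃ s ∈ S, y ≤ s}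


/-- The `n`-comb `C_n`: `Sum.inl i` is the spine point `x_{i+1}` and `Sum.inr i` is the
minimal "tooth" `x'_{i+1}`, for `i : Fin n`.  The co-root is `Sum.inl ⟨n-1,_⟩`. -/
def Comb (n : ℕ) : Type := Fin n ⊕ Fin n

namespace Comb

variable {n : ℕ}

/-- The order of the `n`-comb: `x_i ≤ x_j` iff `i ≤ j`; `x'_i ≤ x_j` iff `i ≤ j`;
the teeth `x'_i` are pairwise incomparable minimal points. -/
def le : Comb n → Comb n → Prop
  | Sum.inl i, Sum.inl j => i ≤ j
  | Sum.inr i, Sum.inl j => i ≤ j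
  | Sum.inr i, Sum.inr j => i = j
  | Sum.inl _, Sum.inr _ => False

instance : PartialOrder (Comb n) where
  le := le
  le_refl x := by
    cases x with
    | inl i => exact (le_refl i : le (Sum.inl i) (Sum.inl i))
    | inr i => exact (rfl : i = i)
  le_trans x y z hxy hyz := by
    cases x with
    | inl i =>
      cases y with
      | inl j =>
        cases z with
        | inl k => exact (le_trans (hxy : i ≤ j) (hyz : j ≤ k) : i ≤ k)
        | inr k => exact ((hyz : False)).elim
      | inr j => exact ((hxy : False)).elim
    | inr i =>
      cases y with
      | inl j =>
        cases z with
        | inl k => exact (le_trans (hxy : i ≤ j) (hyz : j ≤ k) : i ≤ k)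
        | inr k => exact ((hyz : False)).elim
      | inr j =>
        cases z with
        | inl k => exact ((le_of_eq (hxy : i = j)).trans (hyz : j ≤ k) : i ≤ k)
        | inr k => exact (Eq.trans (hxy : i = j) (hyz : j = k) : i = k)
  le_antisymm x y hxy hyx := by
    cases x with
    | inl i =>
      cases y with
      | inl j => exact congrArg Sum.inl (le_antisymm (hxy : i ≤ j) (hyx : j ≤ i))
      | inr j => exact ((hxy : False)).elim
    | inr i =>
      cases y with
      | inl j => exact ((hyx : False)).elim
      | inr j => exact congrArg Sum.inr (hxy : i = j)

instance : TopologicalSpace (Comb n) := ⊥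

instance : DiscreteTopology (Comb n) := ⟨rfl⟩

end Comb

theorem subset_downClo {α : Type*} [Preorder α] (S : Set α) : S ⊆ downClo S :=
  fun x hx => ⟨x, hx, le_rfl⟩

theorem subset_upClo {α : Type*} [Preorder α] (S : Set α) : S ⊆ upClo S :=
  fun x hx => ⟨x, hx, le_rfl⟩

section

variable {X : Type*} [PartialOrder X] {n : ℕ} {Xs Xs' : ℕ → Set X}

/-- The downset generated by `Xs i` is the union of all pieces of index at most `i`. -/
theorem mem_downClo_iff
    (h1 : downClo (Xs 1) = Xs 1 ∪ Xs' 1)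
    (h : ∀ i, 1 < i → i ≤ n → downClo (Xs i) = Xs i ∪ downClo (Xs (i - 1)) ∪ Xs' i)
    {i : ℕ} (hi : 1 ≤ i) (hin : i ≤ n) (z : X) :
    z ∈ downClo (Xs i) ↔ ∃ j, 1 ≤ j ∧ j ≤ i ∧ (z ∈ Xs j ∨ z ∈ Xs' j) := by
  induction i, hi using Nat.le_induction with
  | base =>
    rw [h1]
    constructor
    · intro hz
      exact ⟨1, le_rfl, le_rfl, hz⟩
    · rintro ⟨j, hj, hj', hz⟩
      obtain rfl : j = 1 := by omega
      exact hz
  | succ i hi ih =>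
    rw [h (i + 1) (by omega) hin, Nat.add_sub_cancel]
    constructor
    · rintro ((hz | hz) | hz)
      · exact ⟨i + 1, by omega, le_rfl, Or.inl hz⟩
      · obtain ⟨j, hj, hji, hz⟩ := (ih (by omega)).1 hz
        exact ⟨j, hj, by omega, hz⟩
      · exact ⟨i + 1, by omega, le_rfl, Or.inr hz⟩
    · rintro ⟨j, hj, hji, hz⟩
      rcases Nat.lt_or_ge i j with hij | hij
      · obtain rfl : j = i + 1 := by omega
        exact hz.imp Or.inl id
      · exact Or.inl (Or.inr ((ih (by omega)).2 ⟨j, hj, hij, hz⟩))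

/-- Every point of `Xs i` has points of `Xs j` and of `Xs' j` below it, for all `j ≤ i`. -/
theorem exists_below
    (h1 : Xs 1 ⊆ upClo (Xs' 1))
    (h : ∀ i, 1 < i → i ≤ n → upClo (Xs i) = upClo (Xs (i - 1)) ∩ upClo (Xs' i))
    {i : ℕ} (hi : 1 ≤ i) (hin : i ≤ n) {z : X} (hz : z ∈ Xs i) {j : ℕ} (hj : 1 ≤ j) (hji : j ≤ i) :
    (∃ y ≤ z, y ∈ Xs j) ∧ ∃ y ≤ z, y ∈ Xs' j := by
  induction i, hi using Nat.le_induction generalizing z with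
  | base =>
    obtain rfl : j = 1 := by omega
    obtain ⟨y, hy, hyz⟩ := h1 hz
    exact ⟨⟨z, le_rfl, hz⟩, y, hyz, hy⟩
  | succ i hi ih =>
    have hz' := subset_upClo _ hz
    rw [h (i + 1) (by omega) hin, Nat.add_sub_cancel] at hz'
    obtain ⟨⟨w, hw, hwz⟩, y, hy, hyz⟩ := hz'
    rcases Nat.lt_or_ge i j with hij | hij
    · obtain rfl : j = i + 1 := by omega
      exact ⟨⟨z, le_rfl, hz⟩, y, hyz, hy⟩
    · obtain ⟨⟨a, haw, ha⟩, b, hbw, hb⟩ := ih (by omega) hw hij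
      exact ⟨⟨a, haw.trans hwz, ha⟩, b, hbw.trans hwz, hb⟩

end

/-- Let `n ≥ 1`, `X` a bi-Esakia co-tree with greatest element `⊤`, and
let `Xs 1,…,Xs n, Xs' 1,…,Xs' n` be clopen subsets of `X` satisfying conditions
(IH.i)–(IH.iv) with `⊤ ∈ Xs n`.  Then `X` is the disjoint union of these `2n` sets, and
the map `f : X → C_n` sending `Xs i` to `x_i` and `Xs' i` to `x'_i` is a surjective
continuous bi-p-morphism onto the `n`-comb with the discrete topology. -/
theorem comb_quotient_map
    (n : ℕ) (hn : 1 ≤ n)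
    {X : Type*} [TopologicalSpace X] [PartialOrder X] [CompactSpace X] [OrderTop X]
    (hclo : ∀ U : Set X, IsClopen U → IsClopen (upClo U) ∧ IsClopen (downClo U))
    (hpsa : ∀ x y : X, ¬ x ≤ y → ∃ U : Set X, IsClopen U ∧ IsUpperSet U ∧ x ∈ U ∧ y ∉ U)
    (hchain : ∀ x : X, IsChain (· ≤ ·) (Set.Ici x))
    (Xs Xs' : ℕ → Set X)
    (hclopen : ∀ i, 1 ≤ i → i ≤ n → IsClopen (Xs i) ∧ IsClopen (Xs' i))
    (hconv : ∀ i, 1 ≤ i → i ≤ n → downClo (Xs i) ∩ upClo (Xs i) ⊆ Xs i)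
    (hdownset : ∀ i, 1 ≤ i → i ≤ n → downClo (Xs' i) = Xs' i)
    (hii1 : downClo (Xs 1) = Xs 1 ∪ Xs' 1 ∧ Disjoint (Xs 1) (Xs' 1))
    (hii : ∀ i, 1 < i → i ≤ n →
        downClo (Xs i) = Xs i ∪ downClo (Xs (i - 1)) ∪ Xs' i ∧
        Disjoint (Xs i) (downClo (Xs (i - 1))) ∧ Disjoint (Xs i) (Xs' i) ∧
        Disjoint (downClo (Xs (i - 1))) (Xs' i))
    (hiii : ∀ i, 1 < i → i ≤ n → downClo (Xs (i - 1)) ∩ upClo (Xs' i) = ∅)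
    (hiv1 : upClo (Xs' 1) = upClo (Xs 1) ∪ Xs' 1 ∧ Disjoint (upClo (Xs 1)) (Xs' 1))
    (hiv : ∀ i, 1 < i → i ≤ n → upClo (Xs i) = upClo (Xs (i - 1)) ∩ upClo (Xs' i))
    (htop : (⊤ : X) ∈ Xs n) :
    (∀ z : X, ∃ i, 1 ≤ i ∧ i ≤ n ∧ (z ∈ Xs i ∨ z ∈ Xs' i)) ∧
    (∀ i j, 1 ≤ i → i ≤ n → 1 ≤ j → j ≤ n →
        (i ≠ j → Disjoint (Xs i) (Xs j) ∧ Disjoint (Xs' i) (Xs' j)) ∧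
        Disjoint (Xs i) (Xs' j)) ∧
    (∀ f : X → Comb n,
      (∀ i (h1 : 1 ≤ i) (h2 : i ≤ n),
        (∀ z ∈ Xs i, f z = Sum.inl (⟨i - 1, by omega⟩ : Fin n)) ∧
        (∀ z ∈ Xs' i, f z = Sum.inr (⟨i - 1, by omega⟩ : Fin n))) →
      Continuous f ∧ Monotone f ∧
      (∀ x u, f x ≤ u → ∃ y, x ≤ y ∧ f y = u) ∧
      (∀ x v, v ≤ f x → ∃ z, z ≤ x ∧ f z = v) ∧
      Function.Surjective f) := by
  have hD : ∀ {i : ℕ}, 1 ≤ i → i ≤ n → ∀ z : X,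
      z ∈ downClo (Xs i) ↔ ∃ j, 1 ≤ j ∧ j ≤ i ∧ (z ∈ Xs j ∨ z ∈ Xs' j) :=
    fun hi hin z => mem_downClo_iff hii1.1 (fun i h h' => (hii i h h').1) hi hin z
  have hB : ∀ {i : ℕ}, 1 ≤ i → i ≤ n → ∀ {z : X}, z ∈ Xs i → ∀ {j : ℕ}, 1 ≤ j → j ≤ i →
      (∃ y ≤ z, y ∈ Xs j) ∧ ∃ y ≤ z, y ∈ Xs' j := by
    refine fun hi hin z hz j hj hji => exists_below ?_ hiv hi hin hz hj hji
    rw [hiv1.1]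
    exact (subset_upClo _).trans Set.subset_union_left
  have hcover : ∀ z : X, ∃ i, 1 ≤ i ∧ i ≤ n ∧ (z ∈ Xs i ∨ z ∈ Xs' i) :=
    fun z => (hD hn le_rfl z).1 ⟨⊤, htop, le_top⟩
  refine ⟨hcover, ?_, ?_⟩
  · have hself : ∀ i, 1 ≤ i → i ≤ n → Disjoint (Xs i) (Xs' i) := by
      intro i hi hin
      rcases hi.eq_or_lt with rfl | hi
      · exact hii1.2
      · exact (hii i hi hin).2.2.1
    -- Pieces of smaller index lie in `downClo (Xs (i - 1))`, which misses `Xs i` and `Xs' i`.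
    have hlt : ∀ i j, 1 ≤ j → j < i → i ≤ n →
        Disjoint (Xs i) (Xs j) ∧ Disjoint (Xs' i) (Xs' j) ∧
        Disjoint (Xs i) (Xs' j) ∧ Disjoint (Xs j) (Xs' i) := by
      intro i j hj hji hin
      obtain ⟨-, hd, -, hd'⟩ := hii i (by omega) hin
      have hs : Xs j ⊆ downClo (Xs (i - 1)) := fun z hz =>
        (hD (by omega) (by omega) z).2 ⟨j, hj, by omega, Or.inl hz⟩
      have hs' : Xs' j ⊆ downClo (Xs (i - 1)) := fun z hz =>
        (hD (by omega) (by omega) z).2 ⟨j, hj, by omega, Or.inr hz⟩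
      exact ⟨hd.mono_right hs, hd'.symm.mono_right hs', hd.mono_right hs', hd'.mono_left hs⟩
    intro i j hi hin hj hjn
    rcases lt_trichotomy i j with hij | rfl | hij
    · obtain ⟨h1, h2, h3, h4⟩ := hlt j i hi hij hjn
      exact ⟨fun _ => ⟨h1.symm, h2.symm⟩, h4⟩
    · exact ⟨fun h => absurd rfl h, hself i hi hin⟩
    · obtain ⟨h1, h2, h3, h4⟩ := hlt i j hj hij hin
      exact ⟨fun _ => ⟨h1, h2⟩, h3⟩
  · intro f hf
    -- From here on the pieces are indexed by `k : Fin n`, with the shift `i = k + 1`.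
    have hl : ∀ (k : Fin n) {z : X}, z ∈ Xs (k + 1) → f z = Sum.inl k :=
      fun k z hz => (hf (k + 1) (by omega) k.2).1 z hz
    have hr : ∀ (k : Fin n) {z : X}, z ∈ Xs' (k + 1) → f z = Sum.inr k :=
      fun k z hz => (hf (k + 1) (by omega) k.2).2 z hz
    have hc : ∀ z : X, (∃ k : Fin n, z ∈ Xs (k + 1)) ∨ ∃ k : Fin n, z ∈ Xs' (k + 1) := by
      intro z
      obtain ⟨i, hi, hin, hz⟩ := hcover z
      obtain ⟨k, rfl⟩ : ∃ k, i = k + 1 := ⟨i - 1, by omega⟩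
      exact hz.imp (fun hz => ⟨⟨k, hin⟩, hz⟩) (fun hz => ⟨⟨k, hin⟩, hz⟩)
    have hfl : ∀ (k : Fin n) (z : X), f z = Sum.inl k ↔ z ∈ Xs (k + 1) := by
      refine fun k z => ⟨fun h => ?_, hl k⟩
      rcases hc z with ⟨m, hm⟩ | ⟨m, hm⟩
      · obtain rfl : m = k := Sum.inl_injective ((hl m hm).symm.trans h)
        exact hm
      · exact absurd ((hr m hm).symm.trans h) Sum.inr_ne_inl
    have hfr : ∀ (k : Fin n) (z : X), f z = Sum.inr k ↔ z ∈ Xs' (k + 1) := by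
      refine fun k z => ⟨fun h => ?_, hr k⟩
      rcases hc z with ⟨m, hm⟩ | ⟨m, hm⟩
      · exact absurd ((hl m hm).symm.trans h) Sum.inl_ne_inr
      · obtain rfl : m = k := Sum.inr_injective ((hr m hm).symm.trans h)
        exact hm
    have hdown : ∀ x v, v ≤ f x → ∃ z, z ≤ x ∧ f z = v := by
      intro x v hv
      rcases hc x with ⟨k, hk⟩ | ⟨k, hk⟩
      · rw [hl k hk] at hv
        rcases v with m | m
        · have hmk : (m : ℕ) ≤ k := hv
          obtain ⟨⟨y, hy, hym⟩, -⟩ := hB (by omega) k.2 hk (j := m + 1) (by omega) (by omega)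
          exact ⟨y, hy, hl m hym⟩
        · have hmk : (m : ℕ) ≤ k := hv
          obtain ⟨-, y, hy, hym⟩ := hB (by omega) k.2 hk (j := m + 1) (by omega) (by omega)
          exact ⟨y, hy, hr m hym⟩
      · rw [hr k hk] at hv
        rcases v with m | m
        · exact False.elim hv
        · obtain rfl : m = k := hv
          exact ⟨x, le_rfl, hr m hk⟩
    have hup : ∀ (k m : Fin n) (x : X), k ≤ m → x ∈ Xs (k + 1) ∨ x ∈ Xs' (k + 1) →
        ∃ y, x ≤ y ∧ f y = Sum.inl m := by
      intro k m x hkm hx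
      have hkm' : (k : ℕ) ≤ m := hkm
      obtain ⟨y, hy, hxy⟩ := (hD (i := m + 1) (by omega) m.2 x).2
        ⟨k + 1, by omega, by omega, hx⟩
      exact ⟨y, hxy, hl m hy⟩
    refine ⟨?_, ?_, ?_, hdown, ?_⟩
    · rw [continuous_discrete_rng]
      rintro (k | k)
      · have : f ⁻¹' {Sum.inl k} = Xs (k + 1) := Set.ext (hfl k)
        exact this ▸ (hclopen (k + 1) (by omega) k.2).1.isOpen
      · have : f ⁻¹' {Sum.inr k} = Xs' (k + 1) := Set.ext (hfr k)
        exact this ▸ (hclopen (k + 1) (by omega) k.2).2.isOpen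
    · intro z w hzw
      rcases hc w with ⟨k, hk⟩ | ⟨k, hk⟩
      · obtain ⟨j, hj, hjk, hz⟩ := (hD (by omega) k.2 z).1 ⟨w, hk, hzw⟩
        obtain ⟨m, rfl⟩ : ∃ m, j = m + 1 := ⟨j - 1, by omega⟩
        have hmn : m < n := by omega
        have hmk : (⟨m, hmn⟩ : Fin n) ≤ k := Fin.mk_le_of_le_val (by omega)
        rw [hl k hk]
        rcases hz with hz | hz
        · rw [hl ⟨m, hmn⟩ hz]
          exact hmk
        · rw [hr ⟨m, hmn⟩ hz]
          exact hmk
      · have hz : z ∈ Xs' (k + 1) := by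
          rw [← hdownset (k + 1) (by omega) k.2]
          exact ⟨w, hk, hzw⟩
        exact ((hr k hz).trans (hr k hk).symm).le
    · intro x u hu
      rcases hc x with ⟨k, hk⟩ | ⟨k, hk⟩
      · rw [hl k hk] at hu
        rcases u with m | m
        · exact hup k m x hu (Or.inl hk)
        · exact False.elim hu
      · rw [hr k hk] at hu
        rcases u with m | m
        · exact hup k m x hu (Or.inr hk)
        · obtain rfl : k = m := hu
          exact ⟨x, le_rfl, hr k hk⟩
    · intro v
      -- `f ⊤` is the co-root of the comb, so everything lies below it.
      have ht : f ⊤ = Sum.inl (⟨n - 1, by omega⟩ : Fin n) := (hf n hn le_rfl).1 ⊤ htop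
      have hv : v ≤ f ⊤ := by
        rw [ht]
        rcases v with m | m
        · exact (Fin.le_def.2 (Nat.le_sub_one_of_lt m.2) : m ≤ ⟨n - 1, _⟩)
        · exact (Fin.le_def.2 (Nat.le_sub_one_of_lt m.2) : m ≤ ⟨n - 1, _⟩)
      obtain ⟨z, -, hz⟩ := hdown ⊤ v hv
      exact ⟨z, hz⟩
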